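/- In a multi-triangulated planar graph G, a pair of vertices {u,v} is a cutting pair with exactly L cut-components if and only if (u,v) is an edge of multiplicity L ≥ 2. -/

import Mathlib

/-- A multi-triangulated planar multi-graph, encoded as a connected combinatorial map
(rotation system): darts `D` with an edge-involution `rev` (no fixed points, no loops),
a rotation `rot` whose orbits are the darts around each vertex, all faces (orbits of
`rot ∘ rev`) being triangles, and Euler's formula `|V| - |E| + |F| = 2` certifying a
planar (genus 0) embedding. -/
structure MultiTriangulation (V : Type*) [Fintype V] where
  /-- the darts (half-edges) -/
  D : Type
  [fintypeD : Fintype D]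
  /-- the vertex at which a dart is based -/
  head : D → V
  /-- the opposite dart of the same edge -/
  rev : D → D
  rev_rev : ∀ d, rev (rev d) = d
  /-- no loops -/
  no_loops : ∀ d, head (rev d) ≠ head d
  /-- the rotation: cyclic order of the darts around each vertex -/
  rot : Equiv.Perm D
  rot_head : ∀ d, head (rot d) = head d
  rot_cyclic : ∀ d d', head d = head d' → ∃ n : ℕ, (rot ^ n) d = d'
  /-- every vertex carries some dart -/
  covers : ∀ v : V, ∃ d, head d = v
  /-- the underlying multi-graph is connected -/
  conn : ∀ u v : V,
    Relation.ReflTransGen (fun a b => ∃ d, head d = a ∧ head (rev d) = b) u v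
  /-- every face is a triangle: the face permutation `rot ∘ rev` has order dividing 3 … -/
  face_tri : ∀ d, rot (rev (rot (rev (rot (rev d))))) = d
  /-- … and no fixed points, so every facial circuit has exactly three edges -/
  face_ne : ∀ d, rot (rev d) ≠ d
  /-- Euler's formula `|V| + |F| = 2 + |E|`: the embedding has genus 0, i.e. is planar -/
  euler : Fintype.card V + Fintype.card D / 3 = 2 + Fintype.card D / 2

/-- The underlying simple graph of a multi-triangulation. -/
def MultiTriangulation.graph {V : Type*} [Fintype V] (M : MultiTriangulation V) :
    SimpleGraph V :=
  SimpleGraph.fromRel (fun u v => ∃ d, M.head d = u ∧ M.head (M.rev d) = v)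

/-!
If there is no dart from `u` to `v`, deleting `v` and then `u` keeps the graph connected, because
the neighbours of a vertex, taken in rotation order, form a closed walk. Otherwise, send each dart
from `u` to `v` to the component containing the third vertex of the triangle following it. This is
onto, since walking around `u` one stays in the same component until the next dart to `v` is met.
It is one-to-one by planarity: two parallel darts form a closed curve, Euler's formula makes the
first homology of the surface vanish, and so there is a function on the faces that jumps exactly
across the two edges. This potential is constant on each component, and if both triangles lay in the
same component it would be constant around `u`, contradicting its jump.
-/

theorem mem_of_forall_dotProduct_eq_zero {K ι : Type*} [Field K] [Fintype ι]
    {U W : Submodule K (ι → K)} (horth : ∀ x ∈ U, ∀ y ∈ W, x ⬝ᵥ y = 0)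
    (hdim : Fintype.card ι ≤ Module.finrank K U + Module.finrank K W)
    {g : ι → K} (hg : ∀ y ∈ W, g ⬝ᵥ y = 0) : g ∈ U := by
  classical
  let B : LinearMap.BilinForm K (ι → K) := Matrix.toBilin' 1
  have hB : ∀ x y, B x y = x ⬝ᵥ y := fun x y ↦ by simp [B, Matrix.toBilin'_apply']
  have hnondeg : B.Nondegenerate :=
    LinearMap.BilinForm.nondegenerate_toBilin'_iff_det_ne_zero.2 (by simp)
  have mem_orthogonal : ∀ x, x ∈ B.orthogonal W ↔ ∀ y ∈ W, x ⬝ᵥ y = 0 := fun x ↦ by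
    simp only [LinearMap.BilinForm.mem_orthogonal_iff, hB, dotProduct_comm x]
  have hU : U = B.orthogonal W := by
    refine Submodule.eq_of_le_of_finrank_le (fun x hx ↦ (mem_orthogonal x).2 (horth x hx)) ?_
    rw [LinearMap.BilinForm.finrank_orthogonal hnondeg, Module.finrank_fintype_fun_eq_card]
    lia
  exact hU ▸ (mem_orthogonal g).2 hg

theorem finrank_le_finrank_range_add_one_of_ker_le {K A W : Type*} [DivisionRing K]
    [AddCommGroup A] [Module K A] [FiniteDimensional K A] [AddCommGroup W] [Module K W]
    (T : A →ₗ[K] W) {a : A} (hker : LinearMap.ker T ≤ K ∙ a) :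
    Module.finrank K A ≤ Module.finrank K (LinearMap.range T) + 1 := by
  have hspan : Module.finrank K (K ∙ a) ≤ 1 := by
    simpa using finrank_span_le_card (R := K) ({a} : Set A)
  rw [← LinearMap.finrank_range_add_finrank_ker T]
  gcongr
  exact (Submodule.finrank_mono hker).trans hspan

theorem card_le_mul_card_quotient_sameCycle {α : Type*} [Finite α] {p : Equiv.Perm α} {n : ℕ}
    [NeZero n] (hp : p ^ n = 1) :
    Nat.card α ≤ n * Nat.card (Quotient (Equiv.Perm.SameCycle.setoid p)) := by
  let orbitPoint : Fin n × Quotient (Equiv.Perm.SameCycle.setoid p) → α :=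
    fun x ↦ (p ^ (x.1 : ℕ)) x.2.out
  have hsurj : Function.Surjective orbitPoint := fun a ↦ by
    obtain ⟨i, hi, hia⟩ := Equiv.Perm.SameCycle.exists_pow_eq'
      (Quotient.exact (Quotient.out_eq (Quotient.mk (Equiv.Perm.SameCycle.setoid p) a)))
    have hin : i < n := hi.trans_le (orderOf_le_of_pow_eq_one (NeZero.pos n) hp)
    exact ⟨(⟨i, hin⟩, _), hia⟩
  simpa using Nat.card_le_card_of_surjective _ hsurj

section Connectivity

variable {V : Type*} {G : SimpleGraph V} {S : Set V} {v x y z : V}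

theorem not_connected_iff_two_le_card_connectedComponent [Finite V] [Nonempty V] :
    ¬ G.Connected ↔ 2 ≤ Nat.card G.ConnectedComponent := by
  rw [not_iff_comm, not_le, Nat.lt_succ_iff, Finite.card_le_one_iff_subsingleton]
  refine ⟨fun _ ↦ ⟨fun x y ↦ ?_⟩, fun h ↦ h.preconnected.subsingleton_connectedComponent⟩
  exact SimpleGraph.ConnectedComponent.exact (Subsingleton.elim _ _)

/-- `ReachableIn G S x y` says that `x` and `y` are joined by a walk of `G` all of whose vertices
lie in `S`. It is reachability in `G.induce S`, stated for vertices of `G` rather than of the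
subtype, so that `S` can be changed. -/
def ReachableIn (G : SimpleGraph V) (S : Set V) (x y : V) : Prop :=
  ∃ w : G.Walk x y, ∀ z ∈ w.support, z ∈ S

namespace ReachableIn

theorem refl (hx : x ∈ S) : ReachableIn G S x x := ⟨.nil, by simpa using hx⟩

theorem symm (h : ReachableIn G S x y) : ReachableIn G S y x := by
  obtain ⟨w, hw⟩ := h
  exact ⟨w.reverse, by simpa using hw⟩

theorem trans (hxy : ReachableIn G S x y) (hyz : ReachableIn G S y z) : ReachableIn G S x z := by
  obtain ⟨w, hw⟩ := hxy
  obtain ⟨w', hw'⟩ := hyz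
  exact ⟨w.append w', fun a ha ↦ ((w.mem_support_append_iff w').1 ha).elim (hw a) (hw' a)⟩

theorem left_mem (h : ReachableIn G S x y) : x ∈ S := by
  obtain ⟨w, hw⟩ := h
  exact hw x w.start_mem_support

theorem cons (hx : x ∈ S) (hxy : G.Adj x y) (hyz : ReachableIn G S y z) : ReachableIn G S x z := by
  obtain ⟨w, hw⟩ := hyz
  exact ⟨w.cons hxy, by simpa using ⟨hx, hw⟩⟩

theorem of_adj (hxy : G.Adj x y) (hx : x ∈ S) (hy : y ∈ S) : ReachableIn G S x y :=
  cons hx hxy (refl hy)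

theorem iff_reachable_induce (hx : x ∈ S) (hy : y ∈ S) :
    ReachableIn G S x y ↔ (G.induce S).Reachable ⟨x, hx⟩ ⟨y, hy⟩ := by
  suffices of_walk : ∀ a b : S, (G.induce S).Walk a b → ReachableIn G S a b from
    ⟨fun ⟨w, hw⟩ ↦ ⟨w.induce S hw⟩, fun ⟨w⟩ ↦ of_walk _ _ w⟩
  intro a b w
  induction w with
  | nil => exact refl (Subtype.prop _)
  | cons hadj _ ih => exact cons (Subtype.prop _) hadj ih

theorem exists_adj_sdiff_singleton (h : ReachableIn G S v x) (hx : x ≠ v) :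
    ∃ z, G.Adj v z ∧ ReachableIn G (S \ {v}) z x := by
  suffices key : ∀ y, ReachableIn G S y x → ReachableIn G (S \ {v}) y x ∨
      ∃ z, G.Adj v z ∧ ReachableIn G (S \ {v}) z x from
    (key v h).resolve_left fun h' ↦ h'.left_mem.2 rfl
  rintro y ⟨w, hw⟩
  induction w with
  | nil => exact Or.inl (refl ⟨hw _ (by simp), hx⟩)
  | @cons y y' _ hadj w ih =>
    rcases ih h hx fun z hz ↦ hw z (by simp [hz]) with hy' | hz
    · by_cases hy : y = v
      · exact Or.inr ⟨y', hy ▸ hadj, hy'⟩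
      · exact Or.inl (cons ⟨hw y (by simp), hy⟩ hadj hy')
    · exact Or.inr hz

theorem sdiff_singleton (hS : ∀ x ∈ S, ∀ y ∈ S, ReachableIn G S x y)
    (hv : ∀ x, G.Adj v x → x ∈ S → ∀ y, G.Adj v y → y ∈ S → ReachableIn G (S \ {v}) x y) :
    ∀ x ∈ S \ {v}, ∀ y ∈ S \ {v}, ReachableIn G (S \ {v}) x y := by
  intro x hx y hy
  by_cases hvS : v ∈ S
  · obtain ⟨a, hva, hax⟩ := (hS v hvS x hx.1).exists_adj_sdiff_singleton hx.2
    obtain ⟨b, hvb, hby⟩ := (hS v hvS y hy.1).exists_adj_sdiff_singleton hy.2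
    exact hax.symm.trans ((hv a hva hax.left_mem.1 b hvb hby.left_mem.1).trans hby)
  · rw [Set.sdiff_singleton_eq_self hvS] at hx hy ⊢
    exact hS x hx y hy

end ReachableIn

/-- The vertices that remain when the pair `{u, v}` is deleted. -/
abbrev pairCompl (u v : V) : Set V := {x | x ≠ u ∧ x ≠ v}

theorem univ_sdiff_sdiff_eq_pairCompl (u v : V) : (Set.univ \ {v}) \ {u} = pairCompl u v := by
  ext x
  simp [and_comm]

end Connectivity

namespace MultiTriangulation

variable {V : Type*} [Fintype V] (M : MultiTriangulation V)

attribute [local instance] MultiTriangulation.fintypeD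

/-- The vertex at the far end of a dart; `head` is the vertex it is based at. -/
abbrev tip (d : M.D) : V := M.head (M.rev d)

/-- The third vertex of the triangle between `d` and the next dart around its base vertex. -/
abbrev apex (d : M.D) : V := M.tip (M.rot d)

/-- The darts from `u` to `v`, one for each parallel copy of the edge. -/
def dartsBetween (u v : V) : Set M.D := {d | M.head d = u ∧ M.tip d = v}

variable {M}

theorem rot_induction {p : M.D → Prop} {d e : M.D} (h : M.head d = M.head e) (base : p d)
    (step : ∀ a, M.head a = M.head d → p a → p (M.rot a)) : p e := by
  obtain ⟨n, rfl⟩ := M.rot_cyclic d e h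
  suffices hn : M.head ((M.rot ^ n) d) = M.head d ∧ p ((M.rot ^ n) d) from hn.2
  clear h
  induction n with
  | zero => exact ⟨rfl, base⟩
  | succ n ih =>
    rw [pow_succ', Equiv.Perm.mul_apply, M.rot_head]
    exact ⟨ih.1, step _ ih.1 ih.2⟩

theorem graph_adj_iff {x y : V} : M.graph.Adj x y ↔ ∃ d, M.head d = x ∧ M.tip d = y := by
  rw [graph, SimpleGraph.fromRel_adj]
  constructor
  · rintro ⟨-, h | ⟨d, hy, hx⟩⟩
    · exact h
    · exact ⟨M.rev d, hx, by rw [tip, M.rev_rev, hy]⟩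
  · rintro ⟨d, rfl, rfl⟩
    exact ⟨(M.no_loops d).symm, Or.inl ⟨d, rfl, rfl⟩⟩

theorem adj_head_tip (d : M.D) : M.graph.Adj (M.head d) (M.tip d) :=
  graph_adj_iff.2 ⟨d, rfl, rfl⟩

theorem adj_tip_apex (d : M.D) : M.graph.Adj (M.tip d) (M.apex d) := by
  have htip : M.tip (M.rot (M.rev (M.rot d))) = M.tip d := by
    have hface := M.face_tri (M.rev d)
    rw [M.rev_rev] at hface
    rw [tip, ← M.rot_head, hface]
  exact (graph_adj_iff.2 ⟨_, M.rot_head _, htip⟩).symm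

theorem adj_head_apex (d : M.D) : M.graph.Adj (M.head d) (M.apex d) :=
  M.rot_head d ▸ adj_head_tip (M.rot d)

variable (M) in
theorem reachableIn_univ (x y : V) : ReachableIn M.graph Set.univ x y := by
  induction M.conn x y with
  | refl => exact .refl (Set.mem_univ x)
  | tail _ hadj ih => exact ih.trans (.of_adj (graph_adj_iff.2 hadj) trivial trivial)

theorem eq_of_reachableIn {X : Type*} {f : M.D → X} {S : Set V}
    (hrot : ∀ e, M.head e ∈ S → f (M.rot e) = f e) (hrev : ∀ e, M.head e ∈ S → f (M.rev e) = f e)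
    {a b : M.D} (h : ReachableIn M.graph S (M.head a) (M.head b)) : f a = f b := by
  have around : ∀ d e : M.D, M.head d ∈ S → M.head d = M.head e → f d = f e := fun d e hd hde ↦
    rot_induction (p := (f d = f ·)) hde rfl fun c hc hdc ↦ hdc.trans (hrot c (hc ▸ hd)).symm
  obtain ⟨w, hw⟩ := h
  generalize hx : M.head a = x at w
  generalize hy : M.head b = y at w
  induction w generalizing a with
  | nil => exact around a b (hw _ (by simp [hx])) (hx.trans hy.symm)
  | cons hadj w ih =>
    obtain ⟨d, rfl, rfl⟩ := graph_adj_iff.1 hadj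
    have hd : M.head d ∈ S := hw _ (by simp)
    have hdb : f (M.rev d) = f b := ih rfl hy fun z hz ↦ hw z (by simp [hz])
    rw [around a d (hx ▸ hd) hx, ← hrev d hd, hdb]

theorem eq_of_rot_of_rev {X : Type*} {f : M.D → X} (hrot : ∀ e, f (M.rot e) = f e)
    (hrev : ∀ e, f (M.rev e) = f e) (a b : M.D) : f a = f b :=
  eq_of_reachableIn (fun e _ ↦ hrot e) (fun e _ ↦ hrev e) (M.reachableIn_univ _ _)

section Homology

variable (M)

theorem nonempty_darts : Nonempty M.D := by
  by_contra hD
  rw [not_nonempty_iff] at hD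
  have hV : IsEmpty V := ⟨fun v ↦ hD.elim (M.covers v).choose⟩
  simpa using M.euler

/-- The involution `rev` as a permutation of the darts; its cycles are the edges. -/
def revPerm : Equiv.Perm M.D := Function.Involutive.toPerm M.rev M.rev_rev

/-- The permutation `rot ∘ rev` of the darts; its cycles are the faces. -/
def facePerm : Equiv.Perm M.D := M.rot * M.revPerm

/-- The edges of the multigraph, as pairs of opposite darts. -/
abbrev Edge : Type := Quotient (Equiv.Perm.SameCycle.setoid M.revPerm)

/-- The faces of the embedding, as cycles of darts. -/
abbrev Face : Type := Quotient (Equiv.Perm.SameCycle.setoid M.facePerm)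

variable {M}

/-- The edge to which a dart belongs. -/
def edge (d : M.D) : M.Edge := Quotient.mk _ d

/-- The face on whose boundary circuit a dart lies. -/
def face (d : M.D) : M.Face := Quotient.mk _ d

theorem edge_rev (d : M.D) : edge (M.rev d) = edge d :=
  Quotient.sound (Equiv.Perm.sameCycle_apply_left.2 (.refl M.revPerm d))

theorem face_rot (d : M.D) : face (M.rot d) = face (M.rev d) := by
  have h : face (M.facePerm (M.rev d)) = face (M.rev d) :=
    Quotient.sound (Equiv.Perm.sameCycle_apply_left.2 (.refl M.facePerm _))
  rwa [show M.facePerm (M.rev d) = M.rot d from congrArg M.rot (M.rev_rev d)] at h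

variable (M) in
theorem card_darts_le_two_mul_card_edge : Nat.card M.D ≤ 2 * Nat.card M.Edge :=
  card_le_mul_card_quotient_sameCycle (Equiv.ext M.rev_rev)

variable (M) in
theorem card_darts_le_three_mul_card_face : Nat.card M.D ≤ 3 * Nat.card M.Face :=
  card_le_mul_card_quotient_sameCycle (Equiv.ext M.face_tri)

/-- Real 1-cycles, as functions on darts that are odd under reversal and have zero net flow out of
each vertex. The flow condition is stated dually, as orthogonality to the functions of the base
vertex. -/
structure IsCycle (g : M.D → ℝ) : Prop where
  map_rev : ∀ e, g (M.rev e) = -g e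
  dotProduct_comp_head : ∀ h : V → ℝ, g ⬝ᵥ (h ∘ M.head) = 0

variable (M) in
/-- The boundary of a 2-chain: the jump of a face potential across each dart. -/
def faceBoundary : (M.Face → ℝ) →ₗ[ℝ] (M.D → ℝ) :=
  LinearMap.funLeft ℝ ℝ face - LinearMap.funLeft ℝ ℝ (face ∘ M.rev)

theorem faceBoundary_apply (f : M.Face → ℝ) (e : M.D) :
    M.faceBoundary f e = f (face e) - f (face (M.rev e)) := rfl

variable (M) in
/-- Sums of a function of the undirected edge and the coboundary of a vertex potential; the range
is the orthogonal complement of the 1-cycles. -/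
def evenAddCoboundary : ((M.Edge → ℝ) × (V → ℝ)) →ₗ[ℝ] (M.D → ℝ) :=
  (LinearMap.funLeft ℝ ℝ edge).coprod
    (LinearMap.funLeft ℝ ℝ M.tip - LinearMap.funLeft ℝ ℝ M.head)

theorem evenAddCoboundary_apply (s : M.Edge → ℝ) (h : V → ℝ) (e : M.D) :
    M.evenAddCoboundary (s, h) e = s (edge e) + (h (M.tip e) - h (M.head e)) := rfl

theorem sum_rev {A : Type*} [AddCommMonoid A] (F : M.D → A) : ∑ e, F (M.rev e) = ∑ e, F e :=
  Equiv.sum_comp M.revPerm F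

theorem isCycle_faceBoundary (f : M.Face → ℝ) : IsCycle (M.faceBoundary f) where
  map_rev e := by rw [faceBoundary_apply, faceBoundary_apply, M.rev_rev, neg_sub]
  dotProduct_comp_head h := by
    have hrot : ∑ e, f (face (M.rev e)) * h (M.head e) = ∑ e, f (face e) * h (M.head e) := by
      rw [← Equiv.sum_comp M.rot (fun e ↦ f (face e) * h (M.head e))]
      simp only [face_rot, M.rot_head]
    simp only [dotProduct, faceBoundary_apply, Function.comp_apply, sub_mul,
      Finset.sum_sub_distrib, hrot, sub_self]

theorem IsCycle.dotProduct_evenAddCoboundary {g : M.D → ℝ} (hg : IsCycle g)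
    (w : (M.Edge → ℝ) × (V → ℝ)) : g ⬝ᵥ M.evenAddCoboundary w = 0 := by
  obtain ⟨s, h⟩ := w
  have heven : ∑ e, g e * s (edge e) = 0 := by
    have hrev := sum_rev fun e ↦ g e * s (edge e)
    simp only [hg.map_rev, edge_rev, neg_mul, Finset.sum_neg_distrib] at hrev
    linarith
  have hhead : ∑ e, g e * h (M.head e) = 0 := hg.dotProduct_comp_head h
  have htip : ∑ e, g e * h (M.tip e) = 0 := by
    rw [← sum_rev]
    simp only [tip, hg.map_rev, M.rev_rev, neg_mul, Finset.sum_neg_distrib, hhead, neg_zero]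
  simp only [dotProduct, evenAddCoboundary_apply, mul_add, mul_sub, Finset.sum_add_distrib,
    Finset.sum_sub_distrib, heven, hhead, htip, add_zero, sub_zero]

theorem ker_faceBoundary_le : LinearMap.ker M.faceBoundary ≤ Submodule.span ℝ {1} := by
  intro f hf
  have hrev : ∀ e, f (face (M.rev e)) = f (face e) := fun e ↦
    (sub_eq_zero.1 (congrFun (LinearMap.mem_ker.1 hf) e)).symm
  have hconst := eq_of_rot_of_rev (f := f ∘ face)
    (fun e ↦ (congrArg f (face_rot e)).trans (hrev e)) hrev
  obtain ⟨d⟩ := M.nonempty_darts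
  exact Submodule.mem_span_singleton.2 ⟨f (face d), funext (Quotient.ind fun e ↦
    (mul_one _).trans (hconst d e))⟩

theorem ker_evenAddCoboundary_le :
    LinearMap.ker M.evenAddCoboundary ≤ Submodule.span ℝ {(0, 1)} := by
  rintro ⟨s, h⟩ hsh
  have hsum : ∀ e, s (edge e) + (h (M.tip e) - h (M.head e)) = 0 :=
    congrFun (LinearMap.mem_ker.1 hsh)
  have hs : ∀ e, s (edge e) = 0 := fun e ↦ by
    have hrev := hsum (M.rev e)
    rw [edge_rev, tip, M.rev_rev] at hrev
    linarith [hsum e]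
  have hconst := eq_of_rot_of_rev (f := h ∘ M.head) (fun e ↦ congrArg h (M.rot_head e))
    (fun e ↦ by simpa [hs, sub_eq_zero] using hsum e)
  obtain ⟨d⟩ := M.nonempty_darts
  refine Submodule.mem_span_singleton.2 ⟨h (M.head d), Prod.ext ?_ (funext fun x ↦ ?_)⟩
  · exact funext (Quotient.ind fun e ↦ (mul_zero _).trans (hs e).symm)
  · obtain ⟨e, rfl⟩ := M.covers x
    simpa using hconst d e

variable (M) in
theorem card_darts_le_finrank_add_finrank :
    Fintype.card M.D ≤ Module.finrank ℝ (LinearMap.range M.faceBoundary) +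
      Module.finrank ℝ (LinearMap.range M.evenAddCoboundary) := by
  classical
  have := Fintype.ofFinite M.Edge
  have := Fintype.ofFinite M.Face
  have hface := finrank_le_finrank_range_add_one_of_ker_le M.faceBoundary
    ker_faceBoundary_le
  have hedge := finrank_le_finrank_range_add_one_of_ker_le M.evenAddCoboundary
    ker_evenAddCoboundary_le
  have htwo := M.card_darts_le_two_mul_card_edge
  have hthree := M.card_darts_le_three_mul_card_face
  have heuler := M.euler
  simp only [Module.finrank_prod, Module.finrank_fintype_fun_eq_card] at hface hedge
  simp only [Nat.card_eq_fintype_card] at htwo hthree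
  lia

theorem IsCycle.exists_faceBoundary_eq {g : M.D → ℝ} (hg : IsCycle g) :
    ∃ f, M.faceBoundary f = g := by
  refine mem_of_forall_dotProduct_eq_zero (U := LinearMap.range M.faceBoundary) ?_
    M.card_darts_le_finrank_add_finrank ?_
  · rintro _ ⟨f, rfl⟩ _ ⟨w, rfl⟩
    exact (isCycle_faceBoundary f).dotProduct_evenAddCoboundary w
  · rintro _ ⟨w, rfl⟩
    exact hg.dotProduct_evenAddCoboundary w

open Classical in
/-- The 1-chain that runs once along the dart `d`. -/
noncomputable def dartChain (d : M.D) : M.D → ℝ := Pi.single d 1 - Pi.single (M.rev d) 1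

theorem dartChain_map_rev (d e : M.D) : dartChain d (M.rev e) = -dartChain d e := by
  have hrev : M.rev e = d ↔ e = M.rev d := Function.Involutive.eq_iff M.rev_rev
  have hinj : M.rev e = M.rev d ↔ e = d := (Function.Involutive.injective M.rev_rev).eq_iff
  classical
  simp only [dartChain, Pi.sub_apply, Pi.single_apply, neg_sub]
  exact congrArg₂ (· - ·) (if_congr hrev rfl rfl) (if_congr hinj rfl rfl)

theorem dartChain_dotProduct_comp_head (d : M.D) (h : V → ℝ) :
    dartChain d ⬝ᵥ (h ∘ M.head) = h (M.head d) - h (M.tip d) := by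
  simp [dartChain, sub_dotProduct]

theorem dartChain_self (d : M.D) : dartChain d d = 1 := by
  have hne : d ≠ M.rev d := fun h ↦ M.no_loops d (congrArg M.head h.symm)
  simp [dartChain, hne]

theorem dartChain_of_ne {d e : M.D} (he : e ≠ d) (hrev : e ≠ M.rev d) : dartChain d e = 0 := by
  simp [dartChain, he, hrev]

theorem isCycle_dartChain_sub_dartChain {u v : V} {d d' : M.D} (hd : d ∈ M.dartsBetween u v)
    (hd' : d' ∈ M.dartsBetween u v) : IsCycle (dartChain d - dartChain d') where
  map_rev e := by
    simp only [Pi.sub_apply, dartChain_map_rev]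
    ring
  dotProduct_comp_head h := by
    rw [sub_dotProduct, dartChain_dotProduct_comp_head, dartChain_dotProduct_comp_head,
      hd.1, hd.2, hd'.1, hd'.2, sub_self]

theorem exists_potential_jumping_across {u v : V} {d d' : M.D} (hd : d ∈ M.dartsBetween u v)
    (hd' : d' ∈ M.dartsBetween u v) (hne : d ≠ d') :
    ∃ f : M.D → ℝ, (∀ e, f (M.rot e) = f (M.rev e)) ∧
      (∀ e, e ≠ d → e ≠ d' → e ≠ M.rev d → e ≠ M.rev d' → f (M.rev e) = f e) ∧
      f d ≠ f (M.rev d) := by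
  obtain ⟨f, hf⟩ := (isCycle_dartChain_sub_dartChain hd hd').exists_faceBoundary_eq
  have hjump : ∀ e, f (face e) - f (face (M.rev e)) = dartChain d e - dartChain d' e := congrFun hf
  have hne_rev : d ≠ M.rev d' := fun h ↦ M.no_loops d' (by rw [← h, hd.1, hd'.1])
  refine ⟨f ∘ face, fun e ↦ congrArg f (face_rot e), fun e h1 h2 h3 h4 ↦ ?_, fun h ↦ ?_⟩
  · have hzero := hjump e
    rw [dartChain_of_ne h1 h3, dartChain_of_ne h2 h4, sub_self] at hzero
    exact (sub_eq_zero.1 hzero).symm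
  · have hone := hjump d
    rw [dartChain_self, dartChain_of_ne hne hne_rev, sub_zero] at hone
    exact one_ne_zero (hone.symm.trans (sub_eq_zero.2 h))

end Homology

section CutPair

theorem apex_mem_pairCompl {u v : V} {d : M.D} (hd : d ∈ M.dartsBetween u v) :
    M.apex d ∈ pairCompl u v :=
  ⟨hd.1 ▸ (adj_head_apex d).ne', hd.2 ▸ (adj_tip_apex d).ne'⟩

theorem pairCompl_nonempty (M : MultiTriangulation V) (u v : V) : (pairCompl u v).Nonempty := by
  obtain ⟨d, hd⟩ := M.covers u
  by_cases h : M.tip d = v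
  · exact ⟨_, apex_mem_pairCompl ⟨hd, h⟩⟩
  · exact ⟨_, hd ▸ M.no_loops d, h⟩

theorem reachableIn_of_adj_of_adj {S : Set V} {v x y : V} (hS : ∀ z, M.graph.Adj v z → z ∈ S)
    (hx : M.graph.Adj v x) (hy : M.graph.Adj v y) : ReachableIn M.graph S x y := by
  obtain ⟨d, rfl, rfl⟩ := graph_adj_iff.1 hx
  obtain ⟨e, he, rfl⟩ := graph_adj_iff.1 hy
  refine rot_induction (p := fun e ↦ ReachableIn M.graph S (M.tip d) (M.tip e)) he.symm
    (.refl (hS _ hx)) fun a ha hda ↦ hda.trans (.of_adj (adj_tip_apex a) ?_ ?_)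
  · exact hS _ (ha ▸ adj_head_tip a)
  · exact hS _ (ha ▸ adj_head_apex a)

variable (M) in
theorem reachableIn_sdiff_singleton (v : V) :
    ∀ x ∈ Set.univ \ {v}, ∀ y ∈ Set.univ \ {v}, ReachableIn M.graph (Set.univ \ {v}) x y :=
  ReachableIn.sdiff_singleton (fun x _ y _ ↦ M.reachableIn_univ x y) fun _ hx _ _ hy _ ↦
    reachableIn_of_adj_of_adj (fun _ hz ↦ ⟨trivial, hz.ne'⟩) hx hy

theorem connected_induce_pairCompl {u v : V} (h : M.dartsBetween u v = ∅) :
    (M.graph.induce (pairCompl u v)).Connected := by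
  have hnbr : ∀ z, M.graph.Adj u z → z ∈ pairCompl u v := by
    intro z hz
    refine ⟨hz.ne', ?_⟩
    rintro rfl
    exact Set.eq_empty_iff_forall_notMem.1 h _ (graph_adj_iff.1 hz).choose_spec
  have hreach : ∀ x ∈ pairCompl u v, ∀ y ∈ pairCompl u v,
      ReachableIn M.graph (pairCompl u v) x y := by
    rw [← univ_sdiff_sdiff_eq_pairCompl] at hnbr ⊢
    exact .sdiff_singleton (M.reachableIn_sdiff_singleton v) fun _ hx _ _ hy _ ↦
      reachableIn_of_adj_of_adj hnbr hx hy
  have := (M.pairCompl_nonempty u v).to_subtype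
  exact ⟨fun x y ↦ (ReachableIn.iff_reachable_induce x.2 y.2).1 (hreach x x.2 y y.2)⟩

theorem exists_reachableIn_apex_of_adj {u v x : V} (h : (M.dartsBetween u v).Nonempty)
    (hux : M.graph.Adj u x) (hxv : x ≠ v) :
    ∃ d ∈ M.dartsBetween u v, ReachableIn M.graph (pairCompl u v) (M.apex d) x := by
  obtain ⟨d, rfl, htip⟩ := h
  obtain ⟨e, he, rfl⟩ := graph_adj_iff.1 hux
  refine rot_induction (p := fun e ↦ M.tip e ≠ v → ∃ d₀ ∈ M.dartsBetween (M.head d) v,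
    ReachableIn M.graph (pairCompl (M.head d) v) (M.apex d₀) (M.tip e)) he.symm
    (fun hne ↦ absurd htip hne) (fun a ha ih hne ↦ ?_) hxv
  have hapex : M.apex a ∈ pairCompl (M.head d) v := ⟨ha ▸ (adj_head_apex a).ne', hne⟩
  by_cases hav : M.tip a = v
  · exact ⟨a, ⟨ha, hav⟩, .refl hapex⟩
  · obtain ⟨d₀, hd₀, hreach⟩ := ih hav
    have htip_mem : M.tip a ∈ pairCompl (M.head d) v := ⟨ha ▸ (adj_head_tip a).ne', hav⟩
    exact ⟨d₀, hd₀, hreach.trans (.of_adj (adj_tip_apex a) htip_mem hapex)⟩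

theorem exists_reachableIn_apex {u v x : V} (h : (M.dartsBetween u v).Nonempty)
    (hx : x ∈ pairCompl u v) :
    ∃ d ∈ M.dartsBetween u v, ReachableIn M.graph (pairCompl u v) (M.apex d) x := by
  have huv : u ≠ v := by
    obtain ⟨d, rfl, rfl⟩ := h
    exact (M.no_loops d).symm
  obtain ⟨z, huz, hzx⟩ := (M.reachableIn_sdiff_singleton v u ⟨trivial, huv⟩ x
    ⟨trivial, hx.2⟩).exists_adj_sdiff_singleton hx.1
  rw [univ_sdiff_sdiff_eq_pairCompl] at hzx
  obtain ⟨d, hd, hdz⟩ := exists_reachableIn_apex_of_adj h huz hzx.left_mem.2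
  exact ⟨d, hd, hdz.trans hzx⟩

theorem eq_of_reachableIn_apex {u v : V} {d d' : M.D} (hd : d ∈ M.dartsBetween u v)
    (hd' : d' ∈ M.dartsBetween u v)
    (h : ReachableIn M.graph (pairCompl u v) (M.apex d) (M.apex d')) : d = d' := by
  by_contra hne
  have huv : u ≠ v := hd.1 ▸ hd.2 ▸ (M.no_loops d).symm
  obtain ⟨f, hrot, hrev, hjump⟩ := exists_potential_jumping_across hd hd' hne
  have hrev_compl : ∀ e, M.head e ∈ pairCompl u v → f (M.rev e) = f e := by
    intro e he
    refine hrev e ?_ ?_ ?_ ?_ <;> rintro rfl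
    exacts [he.1 hd.1, he.1 hd'.1, he.2 hd.2, he.2 hd'.2]
  have hapex : ∀ e, M.apex e ∈ pairCompl u v → f (M.rev (M.rot e)) = f (M.rev e) := fun e he ↦ by
    rw [← hrev_compl (M.rev (M.rot e)) he, M.rev_rev, hrot]
  have hsector : f (M.rev d') = f (M.rev d) := by
    rw [← hapex d (apex_mem_pairCompl hd), ← hapex d' (apex_mem_pairCompl hd')]
    exact (eq_of_reachableIn (fun e he ↦ (hrot e).trans (hrev_compl e he)) hrev_compl h).symm
  have haround : ∀ e, M.head d = M.head e → f (M.rev e) = f (M.rev d) := fun e he ↦ by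
    refine rot_induction (p := fun e ↦ f (M.rev e) = f (M.rev d)) he rfl fun a ha ih ↦ ?_
    by_cases had : M.rot a = d
    · rw [had]
    by_cases had' : M.rot a = d'
    · rw [had', hsector]
    have hbase : M.head (M.rot a) = u := (M.rot_head a).trans (ha.trans hd.1)
    rw [hrev _ had had' (fun h ↦ huv (by rw [← hbase, h]; exact hd.2))
      (fun h ↦ huv (by rw [← hbase, h]; exact hd'.2)), hrot, ih]
  have hpred := haround (M.rot.symm d) (by rw [← M.rot_head (M.rot.symm d), M.rot.apply_symm_apply])
  rw [← hrot, M.rot.apply_symm_apply] at hpred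
  exact hjump hpred

/-- The component of the graph without `u` and `v` that contains the apex of a dart from `u`
to `v`. -/
def apexComponent {u v : V} (d : M.dartsBetween u v) :
    (M.graph.induce (pairCompl u v)).ConnectedComponent :=
  SimpleGraph.connectedComponentMk _ ⟨M.apex d, apex_mem_pairCompl d.2⟩

theorem apexComponent_injective {u v : V} :
    Function.Injective (apexComponent : M.dartsBetween u v → _) := fun d d' h ↦
  Subtype.ext (eq_of_reachableIn_apex d.2 d'.2
    ((ReachableIn.iff_reachable_induce _ _).2 (SimpleGraph.ConnectedComponent.exact h)))

theorem apexComponent_surjective {u v : V} (h : (M.dartsBetween u v).Nonempty) :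
    Function.Surjective (apexComponent : M.dartsBetween u v → _) := by
  refine SimpleGraph.ConnectedComponent.ind fun x ↦ ?_
  obtain ⟨d, hd, hdx⟩ := exists_reachableIn_apex h x.2
  exact ⟨⟨d, hd⟩, SimpleGraph.ConnectedComponent.sound
    ((ReachableIn.iff_reachable_induce _ _).1 hdx)⟩

variable (M) in
theorem card_connectedComponent_pairCompl (u v : V) :
    Nat.card (M.graph.induce (pairCompl u v)).ConnectedComponent =
      max 1 (Nat.card (M.dartsBetween u v)) := by
  rcases (M.dartsBetween u v).eq_empty_or_nonempty with h | h
  · have hconn := connected_induce_pairCompl h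
    have := hconn.nonempty
    have := hconn.preconnected.subsingleton_connectedComponent
    simp [h]
  · have := h.to_subtype
    rw [← Nat.card_eq_of_bijective _ ⟨apexComponent_injective, apexComponent_surjective h⟩,
      max_eq_right Nat.card_pos]

end CutPair

end MultiTriangulation

/-- In a multi-triangulated planar graph, `{u,v}` is a cutting pair with exactly `L`
cut-components if and only if `(u,v)` is an edge of multiplicity `L ≥ 2` (there are
exactly `L` parallel darts from `u` to `v`). -/
theorem stmt16 {V : Type*} [Fintype V] (M : MultiTriangulation V) (u v : V)
    (huv : u ≠ v) (L : ℕ) :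
    (¬ (M.graph.induce {x | x ≠ u ∧ x ≠ v}).Connected ∧
      Nat.card ((M.graph.induce {x | x ≠ u ∧ x ≠ v}).ConnectedComponent) = L)
    ↔ (2 ≤ L ∧ Nat.card {d : M.D // M.head d = u ∧ M.head (M.rev d) = v} = L) := by
  have := (M.pairCompl_nonempty u v).to_subtype
  have hcard := M.card_connectedComponent_pairCompl u v
  change _ ↔ 2 ≤ L ∧ Nat.card (M.dartsBetween u v) = L
  rw [not_connected_iff_two_le_card_connectedComponent, hcard]
  lia
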